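/- arXiv:1209.1237 — 2 statements merged into one kernel-verified Lean document; each statement's English description precedes it below -/
import Mathlib

section
/- Let f be a binary octavic over a field k with char k ∉ {2,3,5,7}. If J_4(f) = J_5(f) = J_6(f) = J_7(f) = 0, then J_8(f) · ( −10125·J_8(f) + 1075648·J_2(f)^4 − 42336·J_3(f)^2·J_2(f) ) = 0. -/
noncomputable section

open MvPolynomial


variable {k : Type*} [Field k]

/-- char k not in {2,3,5,7} -/
def CharOK (k : Type*) [Field k] : Prop :=
  ringChar k ≠ 2 ∧ ringChar k ≠ 3 ∧ ringChar k ≠ 5 ∧ ringChar k ≠ 7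

/-- the r-th transvectant of binary forms f, g of degrees n and m -/
def transvectant (n m r : ℕ) (f g : MvPolynomial (Fin 2) k) : MvPolynomial (Fin 2) k :=
  C ((((m - r).factorial * (n - r).factorial : ℕ) : k) /
      ((n.factorial * m.factorial : ℕ) : k)) *
    ∑ j ∈ Finset.range (r + 1),
      C ((-1 : k) ^ j * (r.choose j : k)) *
        ((fun p => pderiv (0 : Fin 2) p)^[r - j] ((fun p => pderiv (1 : Fin 2) p)^[j] f)) *
        ((fun p => pderiv (0 : Fin 2) p)^[j] ((fun p => pderiv (1 : Fin 2) p)^[r - j] g))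

/-- the binary octavic with coefficient vector a -/
def octForm (a : Fin 9 → k) : MvPolynomial (Fin 2) k :=
  ∑ i : Fin 9, C (a i) * X 0 ^ (i : ℕ) * X 1 ^ (8 - (i : ℕ))

def covg (a : Fin 9 → k) := transvectant 8 8 4 (octForm a) (octForm a)
def covk (a : Fin 9 → k) := transvectant 8 8 6 (octForm a) (octForm a)
def covh (a : Fin 9 → k) := transvectant 4 4 2 (covk a) (covk a)
def covm (a : Fin 9 → k) := transvectant 8 4 4 (octForm a) (covk a)
def covn (a : Fin 9 → k) := transvectant 8 4 4 (octForm a) (covh a)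
def covp (a : Fin 9 → k) := transvectant 8 4 4 (covg a) (covk a)
def covq (a : Fin 9 → k) := transvectant 8 4 4 (covg a) (covh a)

def J2 (a : Fin 9 → k) : k :=
  (2 ^ 2 * 5 * 7 : k) * constantCoeff (transvectant 8 8 8 (octForm a) (octForm a))
def J3 (a : Fin 9 → k) : k :=
  ((2 ^ 4 * 5 ^ 2 * 7 ^ 3 : k) / 3) * constantCoeff (transvectant 8 8 8 (octForm a) (covg a))
def J4 (a : Fin 9 → k) : k :=
  (2 ^ 9 * 3 * 7 ^ 4 : k) * constantCoeff (transvectant 4 4 4 (covk a) (covk a))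
def J5 (a : Fin 9 → k) : k :=
  (2 ^ 9 * 5 * 7 ^ 5 : k) * constantCoeff (transvectant 4 4 4 (covm a) (covk a))
def J6 (a : Fin 9 → k) : k :=
  (2 ^ 14 * 3 ^ 2 * 7 ^ 6 : k) * constantCoeff (transvectant 4 4 4 (covk a) (covh a))
def J7 (a : Fin 9 → k) : k :=
  (2 ^ 14 * 3 * 5 * 7 ^ 7 : k) * constantCoeff (transvectant 4 4 4 (covm a) (covh a))
def J8 (a : Fin 9 → k) : k :=
  (2 ^ 17 * 3 * 5 ^ 2 * 7 ^ 9 : k) * constantCoeff (transvectant 4 4 4 (covp a) (covh a))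
def J9 (a : Fin 9 → k) : k :=
  (2 ^ 19 * 3 ^ 2 * 5 * 7 ^ 9 : k) * constantCoeff (transvectant 4 4 4 (covn a) (covh a))
def J10 (a : Fin 9 → k) : k :=
  (2 ^ 22 * 3 ^ 2 * 5 ^ 2 * 7 ^ 11 : k) * constantCoeff (transvectant 4 4 4 (covq a) (covh a))

def Jinv : ℕ → (Fin 9 → k) → k
  | 2 => J2
  | 3 => J3
  | 4 => J4
  | 5 => J5
  | 6 => J6
  | 7 => J7
  | 8 => J8
  | 9 => J9
  | 10 => J10
  | _ => fun _ => 0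

/-- action of a 2x2 matrix on binary forms by substitution (X,Y) ↦ (aX+bY, cX+dY) -/
def substForm (g : Matrix (Fin 2) (Fin 2) k) (p : MvPolynomial (Fin 2) k) :
    MvPolynomial (Fin 2) k :=
  aeval (fun i : Fin 2 => C (g i 0) * X 0 + C (g i 1) * X 1) p

/-- coefficients of the transformed octavic -/
def octAct (g : Matrix (Fin 2) (Fin 2) k) (a : Fin 9 → k) : Fin 9 → k := fun i =>
  coeff (Finsupp.single (0 : Fin 2) (i : ℕ) + Finsupp.single (1 : Fin 2) (8 - (i : ℕ)))
    (substForm g (octForm a))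

section Equiv
open TensorProduct

/-- linear substitution -/
def sb (p q r s : k) : MvPolynomial (Fin 2) k →ₐ[k] MvPolynomial (Fin 2) k :=
  aeval ![C p * X 0 + C q * X 1, C r * X 0 + C s * X 1]

lemma pd0_sb (p q r s : k) (f : MvPolynomial (Fin 2) k) :
    pderiv 0 (sb p q r s f) = p • sb p q r s (pderiv 0 f) + r • sb p q r s (pderiv 1 f) := by
  induction f using MvPolynomial.induction_on with
  | C a => simp [sb]
  | add f g hf hg => simp only [map_add, hf, hg, smul_add]; abel
  | mul_X f i hf =>
    simp only [map_mul, Derivation.leibniz, hf, map_add, smul_eq_mul, MvPolynomial.smul_eq_C_mul]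
    fin_cases i <;> simp [sb, pderiv_X] <;> ring

lemma pd1_sb (p q r s : k) (f : MvPolynomial (Fin 2) k) :
    pderiv 1 (sb p q r s f) = q • sb p q r s (pderiv 0 f) + s • sb p q r s (pderiv 1 f) := by
  induction f using MvPolynomial.induction_on with
  | C a => simp [sb]
  | add f g hf hg => simp only [map_add, hf, hg, smul_add]; abel
  | mul_X f i hf =>
    simp only [map_mul, Derivation.leibniz, hf, map_add, smul_eq_mul, MvPolynomial.smul_eq_C_mul]
    fin_cases i <;> simp [sb, pderiv_X] <;> ring

def dd (i : Fin 2) : Module.End k (MvPolynomial (Fin 2) k) := (pderiv i).toLinearMap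

lemma dd_comm : Commute (dd (k := k) 0) (dd 1) := by
  have h : ∀ f : MvPolynomial (Fin 2) k, pderiv 0 (pderiv 1 f) = pderiv 1 (pderiv 0 f) := by
    intro f
    induction f using MvPolynomial.induction_on with
    | C a => simp
    | add f g hf hg => simp only [map_add, hf, hg]
    | mul_X f i hf =>
      simp only [Derivation.leibniz, hf, map_add, smul_eq_mul]
      fin_cases i <;> simp [pderiv_X] <;> ring
  exact LinearMap.ext h

abbrev EE (k : Type*) [Field k] :=
  Module.End k (MvPolynomial (Fin 2) k ⊗[k] MvPolynomial (Fin 2) k)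

def ea : Module.End k (MvPolynomial (Fin 2) k ⊗[k] MvPolynomial (Fin 2) k) :=
  TensorProduct.map (dd 0) (dd 1)
def eb : Module.End k (MvPolynomial (Fin 2) k ⊗[k] MvPolynomial (Fin 2) k) :=
  TensorProduct.map (dd 1) (dd 0)

lemma eab_comm : Commute ((-1 : k) • (eb : EE k)) (ea : EE k) := by
  refine Commute.smul_left ?_ _
  unfold Commute SemiconjBy ea eb
  rw [← TensorProduct.map_mul, ← TensorProduct.map_mul, dd_comm.eq]

lemma tv_eq (n m r : ℕ) (f g : MvPolynomial (Fin 2) k) :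
    transvectant n m r f g =
    C ((((m - r).factorial * (n - r).factorial : ℕ) : k) /
      ((n.factorial * m.factorial : ℕ) : k)) *
      LinearMap.mul' k _ ((((-1 : k) • eb + ea : EE k) ^ r) (f ⊗ₜ[k] g)) := by
  unfold transvectant
  congr 1
  rw [eab_comm.add_pow, LinearMap.sum_apply, map_sum]
  refine Finset.sum_congr rfl fun j _ => ?_
  have e : ((-1 : k) • (eb : EE k)) ^ j * ea ^ (r - j) * ((r.choose j : ℕ) : Module.End k _)
     = ((-1 : k) ^ j * (r.choose j : k)) • TensorProduct.map (dd 0 ^ (r - j) * dd 1 ^ j)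
        (dd 0 ^ j * dd 1 ^ (r - j)) := by
    rw [smul_pow, ← nsmul_eq_mul', ← Nat.cast_smul_eq_nsmul k, smul_mul_assoc, smul_smul,
      mul_comm ((r.choose j : k))]
    congr 1
    unfold ea eb
    rw [TensorProduct.map_pow, TensorProduct.map_pow, ← TensorProduct.map_mul,
      (dd_comm.pow_pow (r - j) j).eq]
  rw [e]
  simp only [LinearMap.smul_apply, TensorProduct.map_tmul, map_smul, LinearMap.mul'_apply,
    MvPolynomial.smul_eq_C_mul, Module.End.mul_apply, Module.End.pow_apply, mul_assoc]
  rfl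

lemma tv_sb (p q r s : k) (hd : p * s - q * r = 1) (n m t : ℕ) (f g : MvPolynomial (Fin 2) k) :
    transvectant n m t (sb p q r s f) (sb p q r s g) = sb p q r s (transvectant n m t f g) := by
  rw [tv_eq, tv_eq, map_mul]
  have hC : ∀ c : k, sb p q r s (C c) = C c := fun c => by simp [sb]
  rw [hC]
  congr 1
  let S := TensorProduct.map (sb p q r s).toLinearMap (sb p q r s).toLinearMap
  have h1 : ((-1 : k) • eb + ea) ∘ₗ S = S ∘ₗ ((-1 : k) • eb + ea) := by
    apply TensorProduct.ext'
    intro f g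
    simp only [S, LinearMap.comp_apply, LinearMap.add_apply, LinearMap.smul_apply, ea, eb,
      TensorProduct.map_tmul, AlgHom.toLinearMap_apply, dd, 
      Derivation.coeFn_coe, pd0_sb, pd1_sb, TensorProduct.add_tmul, TensorProduct.tmul_add,
      ← TensorProduct.smul_tmul', TensorProduct.tmul_smul, map_add, map_smul, smul_smul]
    generalize sb p q r s ((pderiv 0) f) ⊗ₜ[k] sb p q r s ((pderiv 1) g) = A
    generalize sb p q r s ((pderiv 1) f) ⊗ₜ[k] sb p q r s ((pderiv 0) g) = B
    generalize sb p q r s ((pderiv 0) f) ⊗ₜ[k] sb p q r s ((pderiv 0) g) = A'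
    generalize sb p q r s ((pderiv 1) f) ⊗ₜ[k] sb p q r s ((pderiv 1) g) = B'
    linear_combination (norm := module) hd • A - hd • B
  have h2 : ∀ t : ℕ, ∀ x, (((-1 : k) • eb + ea : EE k) ^ t) (S x) = S ((((-1 : k) • eb + ea : EE k) ^ t) x) := by
    intro t
    induction t with
    | zero => intro x; rfl
    | succ t ih =>
      intro x
      rw [pow_succ, Module.End.mul_apply, Module.End.mul_apply, ← ih]
      congr 1
      exact LinearMap.congr_fun h1 x
  have h3 : ∀ x, LinearMap.mul' k _ (S x) = sb p q r s (LinearMap.mul' k _ x) := by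
    intro x
    induction x using TensorProduct.induction_on with
    | zero => simp
    | tmul a b => simp [S]
    | add a b ha hb => simp only [map_add, ha, hb]
  have h4 := h2 t (f ⊗ₜ[k] g)
  rw [← h3, ← h4]
  rfl

lemma cc_sb (p q r s : k) (f : MvPolynomial (Fin 2) k) :
    constantCoeff (sb p q r s f) = constantCoeff f := by
  induction f using MvPolynomial.induction_on with
  | C a => simp [sb]
  | add f g hf hg => simp only [map_add, hf, hg]
  | mul_X f i hf =>
    simp only [map_mul, hf]
    fin_cases i <;> simp [sb]

end Equiv

lemma J_inv (p q r s : k) (hd : p * s - q * r = 1) (a b : Fin 9 → k)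
    (hab : octForm b = sb p q r s (octForm a)) :
    covk b = sb p q r s (covk a) ∧ covh b = sb p q r s (covh a) ∧ J2 b = J2 a ∧ J3 b = J3 a ∧
    J4 b = J4 a ∧ J5 b = J5 a ∧ J6 b = J6 a ∧ J7 b = J7 a ∧ J8 b = J8 a := by
  have hk : covk b = sb p q r s (covk a) := by simp only [covk, hab, tv_sb p q r s hd]
  have hh : covh b = sb p q r s (covh a) := by simp only [covh, hk, tv_sb p q r s hd]
  have hg : covg b = sb p q r s (covg a) := by simp only [covg, hab, tv_sb p q r s hd]
  have hm : covm b = sb p q r s (covm a) := by simp only [covm, hab, hk, tv_sb p q r s hd]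
  have hp : covp b = sb p q r s (covp a) := by simp only [covp, hg, hk, tv_sb p q r s hd]
  refine ⟨hk, hh, ?_, ?_, ?_, ?_, ?_, ?_, ?_⟩ <;>
  simp only [J2, J3, J4, J5, J6, J7, J8, hab, hk, hh, hg, hm, hp, tv_sb p q r s hd, cc_sb]

set_option linter.unusedSimpArgs false
/-- form of degree n with coefficients c -/
def FF (n : ℕ) (c : ℕ → k) : MvPolynomial (Fin 2) k :=
  ∑ i ∈ Finset.range (n + 1), C (c i) * X 0 ^ i * X 1 ^ (n - i)

lemma pd0_FF (n : ℕ) (c : ℕ → k) :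
    pderiv 0 (FF (n + 1) c) = FF n (fun i => (i + 1 : k) * c (i + 1)) := by
  unfold FF
  rw [map_sum, Finset.sum_range_succ']
  simp only [Derivation.leibniz, Derivation.leibniz_pow, pderiv_X, pderiv_C, Pi.single_apply]
  simp
  refine Finset.sum_congr rfl fun i _ => ?_
  ring

lemma pd1_FF (n : ℕ) (c : ℕ → k) :
    pderiv 1 (FF (n + 1) c) = FF n (fun i => ((n + 1 - i : ℕ) : k) * c i) := by
  unfold FF
  rw [map_sum, Finset.sum_range_succ]
  simp only [Derivation.leibniz, Derivation.leibniz_pow, pderiv_X, pderiv_C, Pi.single_apply]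
  simp
  refine Finset.sum_congr rfl fun i hi => ?_
  have : n + 1 - i - 1 = n - i := by omega
  rw [this]
  ring

lemma FF_add (n : ℕ) (c d : ℕ → k) : FF n c + FF n d = FF n (fun i => c i + d i) := by
  unfold FF
  rw [← Finset.sum_add_distrib]
  refine Finset.sum_congr rfl fun i _ => ?_
  rw [map_add]; ring

lemma C_mul_FF (n : ℕ) (x : k) (c : ℕ → k) : C x * FF n c = FF n (fun i => x * c i) := by
  unfold FF
  rw [Finset.mul_sum]
  refine Finset.sum_congr rfl fun i _ => ?_
  rw [map_mul]; ring

lemma FF0_mul (n : ℕ) (c d : ℕ → k) : FF 0 c * FF n d = FF n (fun i => c 0 * d i) := by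
  rw [← C_mul_FF]; simp [FF]

lemma FF_mul0 (n : ℕ) (c d : ℕ → k) : FF n c * FF 0 d = FF n (fun i => c i * d 0) := by
  rw [mul_comm, FF0_mul]; simp only [mul_comm]

def v5 (x0 x1 x2 x3 x4 : k) : ℕ → k
  | 0 => x0 | 1 => x1 | 2 => x2 | 3 => x3 | 4 => x4 | _ => 0

def v9 (x0 x1 x2 x3 x4 x5 x6 x7 x8 : k) : ℕ → k
  | 0 => x0 | 1 => x1 | 2 => x2 | 3 => x3 | 4 => x4 | 5 => x5 | 6 => x6 | 7 => x7 | 8 => x8 | _ => 0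

lemma FF2_mul (c d : ℕ → k) : FF 2 c * FF 2 d = FF 4 (v5 (c 0 * d 0) (c 0 * d 1 + c 1 * d 0)
    (c 0 * d 2 + c 1 * d 1 + c 2 * d 0) (c 1 * d 2 + c 2 * d 1) (c 2 * d 2)) := by
  simp only [FF, Finset.sum_range_succ, Finset.sum_range_zero, v5, map_add, map_mul]
  norm_num
  ring

lemma FF4_mul (c d : ℕ → k) : FF 4 c * FF 4 d = FF 8 (v9 (c 0 * d 0) (c 0 * d 1 + c 1 * d 0)
    (c 0 * d 2 + c 1 * d 1 + c 2 * d 0) (c 0 * d 3 + c 1 * d 2 + c 2 * d 1 + c 3 * d 0)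
    (c 0 * d 4 + c 1 * d 3 + c 2 * d 2 + c 3 * d 1 + c 4 * d 0)
    (c 1 * d 4 + c 2 * d 3 + c 3 * d 2 + c 4 * d 1) (c 2 * d 4 + c 3 * d 3 + c 4 * d 2)
    (c 3 * d 4 + c 4 * d 3) (c 4 * d 4)) := by
  simp only [FF, Finset.sum_range_succ, Finset.sum_range_zero, v9, map_add, map_mul]
  norm_num
  ring

lemma FF_congr5 (c d : ℕ → k) (h0 : c 0 = d 0) (h1 : c 1 = d 1) (h2 : c 2 = d 2) (h3 : c 3 = d 3)
    (h4 : c 4 = d 4) : FF 4 c = FF 4 d := by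
  simp only [FF, Finset.sum_range_succ, Finset.sum_range_zero, *]

lemma FF_congr9 (c d : ℕ → k) (h0 : c 0 = d 0) (h1 : c 1 = d 1) (h2 : c 2 = d 2) (h3 : c 3 = d 3)
    (h4 : c 4 = d 4) (h5 : c 5 = d 5) (h6 : c 6 = d 6) (h7 : c 7 = d 7) (h8 : c 8 = d 8) :
    FF 8 c = FF 8 d := by
  simp only [FF, Finset.sum_range_succ, Finset.sum_range_zero, *]

lemma cc_FF0 (c : ℕ → k) : constantCoeff (FF 0 c) = c 0 := by simp [FF]

lemma coeff_FF (n i : ℕ) (hi : i ≤ n) (c : ℕ → k) :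
    coeff (Finsupp.single (0 : Fin 2) i + Finsupp.single (1 : Fin 2) (n - i)) (FF n c) = c i := by
  unfold FF
  rw [coeff_sum, Finset.sum_eq_single i]
  · rw [mul_assoc, coeff_C_mul, X_pow_eq_monomial, X_pow_eq_monomial, monomial_mul, coeff_monomial]
    simp
  · intro j _ hj
    rw [mul_assoc, coeff_C_mul, X_pow_eq_monomial, X_pow_eq_monomial, monomial_mul, coeff_monomial,
      if_neg]
    · simp
    · intro h
      apply hj
      have := DFunLike.congr_fun h 0
      simpa using this
  · intro h; simp at h; omega

lemma FF_inj (n : ℕ) (c d : ℕ → k) (h : FF n c = FF n d) (i : ℕ) (hi : i ≤ n) : c i = d i := by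
  rw [← coeff_FF n i hi c, h, coeff_FF n i hi d]

lemma oct_FF (a : Fin 9 → k) :
    octForm a = FF 8 (v9 (a 0) (a 1) (a 2) (a 3) (a 4) (a 5) (a 6) (a 7) (a 8)) := by
  simp only [octForm, FF, Fin.sum_univ_succ, Finset.sum_range_succ, Finset.sum_range_zero, v9]
  simp
  ring_nf

section D
variable (c : ℕ → k)
lemma p08 : pderiv 0 (FF 8 c) = FF 7 (fun i => (i + 1 : k) * c (i + 1)) := pd0_FF 7 c
lemma p07 : pderiv 0 (FF 7 c) = FF 6 (fun i => (i + 1 : k) * c (i + 1)) := pd0_FF 6 c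
lemma p06 : pderiv 0 (FF 6 c) = FF 5 (fun i => (i + 1 : k) * c (i + 1)) := pd0_FF 5 c
lemma p05 : pderiv 0 (FF 5 c) = FF 4 (fun i => (i + 1 : k) * c (i + 1)) := pd0_FF 4 c
lemma p04 : pderiv 0 (FF 4 c) = FF 3 (fun i => (i + 1 : k) * c (i + 1)) := pd0_FF 3 c
lemma p03 : pderiv 0 (FF 3 c) = FF 2 (fun i => (i + 1 : k) * c (i + 1)) := pd0_FF 2 c
lemma p02 : pderiv 0 (FF 2 c) = FF 1 (fun i => (i + 1 : k) * c (i + 1)) := pd0_FF 1 c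
lemma p01 : pderiv 0 (FF 1 c) = FF 0 (fun i => (i + 1 : k) * c (i + 1)) := pd0_FF 0 c
lemma p18 : pderiv 1 (FF 8 c) = FF 7 (fun i => ((8 - i : ℕ) : k) * c i) := pd1_FF 7 c
lemma p17 : pderiv 1 (FF 7 c) = FF 6 (fun i => ((7 - i : ℕ) : k) * c i) := pd1_FF 6 c
lemma p16 : pderiv 1 (FF 6 c) = FF 5 (fun i => ((6 - i : ℕ) : k) * c i) := pd1_FF 5 c
lemma p15 : pderiv 1 (FF 5 c) = FF 4 (fun i => ((5 - i : ℕ) : k) * c i) := pd1_FF 4 c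
lemma p14 : pderiv 1 (FF 4 c) = FF 3 (fun i => ((4 - i : ℕ) : k) * c i) := pd1_FF 3 c
lemma p13 : pderiv 1 (FF 3 c) = FF 2 (fun i => ((3 - i : ℕ) : k) * c i) := pd1_FF 2 c
lemma p12 : pderiv 1 (FF 2 c) = FF 1 (fun i => ((2 - i : ℕ) : k) * c i) := pd1_FF 1 c
lemma p11 : pderiv 1 (FF 1 c) = FF 0 (fun i => ((1 - i : ℕ) : k) * c i) := pd1_FF 0 c
end D

lemma FF_congr0 (c d : ℕ → k) (h0 : c 0 = d 0) : FF 0 c = FF 0 d := by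
  simp only [FF, Finset.sum_range_succ, Finset.sum_range_zero, *]

lemma tv844 (h2 : (2 : k) ≠ 0) (h3 : (3 : k) ≠ 0) (h5 : (5 : k) ≠ 0) (h7 : (7 : k) ≠ 0)
    (c d : ℕ → k) : transvectant 8 4 4 (FF 8 c) (FF 4 d) = FF 4 (v5
      ((4 * c 4 * d 0 + (-5) * c 3 * d 1 + 10 * c 2 * d 2 + (-35) * c 1 * d 3 + 280 * c 0 * d 4) / (2 ^ 3 * 5 ^ 1 * 7 ^ 1))
      ((5 * c 5 * d 0 + (-4) * c 4 * d 1 + 5 * c 3 * d 2 + (-10) * c 2 * d 3 + 35 * c 1 * d 4) / (2 ^ 1 * 5 ^ 1 * 7 ^ 1))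
      ((30 * c 6 * d 0 + (-15) * c 5 * d 1 + 12 * c 4 * d 2 + (-15) * c 3 * d 3 + 30 * c 2 * d 4) / (2 ^ 2 * 5 ^ 1 * 7 ^ 1))
      ((35 * c 7 * d 0 + (-10) * c 6 * d 1 + 5 * c 5 * d 2 + (-4) * c 4 * d 3 + 5 * c 3 * d 4) / (2 ^ 1 * 5 ^ 1 * 7 ^ 1))
      ((280 * c 8 * d 0 + (-35) * c 7 * d 1 + 10 * c 6 * d 2 + (-5) * c 5 * d 3 + 4 * c 4 * d 4) / (2 ^ 3 * 5 ^ 1 * 7 ^ 1))) := by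
  have hw : ((((4 - 4).factorial * (8 - 4).factorial : ℕ) : k) /
      ((8).factorial * (4).factorial : ℕ)) = 1 / (2 ^ 7 * 3 ^ 2 * 5 ^ 1 * 7 ^ 1) := by
    rw [show (4 - 4 : ℕ).factorial * (8 - 4 : ℕ).factorial = 24 by simp [Nat.factorial],
      show (8 : ℕ).factorial * (4 : ℕ).factorial = 967680 by simp [Nat.factorial],
      show ((967680 : ℕ) : k) = 2 ^ 10 * 3 ^ 3 * 5 ^ 1 * 7 ^ 1 by norm_num]
    field_simp
    norm_num
  unfold transvectant
  rw [hw]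
  simp only [Finset.sum_range_succ, Finset.sum_range_zero, Nat.reduceSub, Nat.reduceAdd,
    Function.iterate_succ, Function.iterate_zero, Function.comp, id, p08, p07, p06, p05, p04, p03,
    p02, p01, p18, p17, p16, p15, p14, p13, p12, p11, FF0_mul, FF_mul0, FF2_mul, FF4_mul, C_mul_FF,
    FF_add, zero_add]
  apply FF_congr5 <;>
  · simp only [v5, v9, Nat.reduceSub, Nat.reduceAdd, Nat.cast_zero, Nat.cast_one, Nat.cast_ofNat,
      show Nat.choose 4 0 = 1 from rfl, show Nat.choose 4 1 = 4 from rfl, show Nat.choose 4 2 = 6 from rfl, show Nat.choose 4 3 = 4 from rfl, show Nat.choose 4 4 = 1 from rfl]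
    field_simp
    ring

lemma tv442 (h2 : (2 : k) ≠ 0) (h3 : (3 : k) ≠ 0) (h5 : (5 : k) ≠ 0) (h7 : (7 : k) ≠ 0)
    (c d : ℕ → k) : transvectant 4 4 2 (FF 4 c) (FF 4 d) = FF 4 (v5
      ((4 * c 2 * d 0 + (-3) * c 1 * d 1 + 4 * c 0 * d 2) / (2 ^ 3 * 3 ^ 1))
      (((-1) * c 2 * d 1 + 6 * c 3 * d 0 + (-1) * c 1 * d 2 + 6 * c 0 * d 3) / (2 ^ 2 * 3 ^ 1))
      (((-4) * c 2 * d 2 + 3 * c 3 * d 1 + 24 * c 4 * d 0 + 3 * c 1 * d 3 + 24 * c 0 * d 4) / (2 ^ 3 * 3 ^ 1))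
      (((-1) * c 3 * d 2 + 6 * c 4 * d 1 + (-1) * c 2 * d 3 + 6 * c 1 * d 4) / (2 ^ 2 * 3 ^ 1))
      ((4 * c 4 * d 2 + (-3) * c 3 * d 3 + 4 * c 2 * d 4) / (2 ^ 3 * 3 ^ 1))) := by
  have hw : ((((4 - 2).factorial * (4 - 2).factorial : ℕ) : k) /
      ((4).factorial * (4).factorial : ℕ)) = 1 / (2 ^ 4 * 3 ^ 2) := by
    rw [show (4 - 2 : ℕ).factorial * (4 - 2 : ℕ).factorial = 4 by simp [Nat.factorial],
      show (4 : ℕ).factorial * (4 : ℕ).factorial = 576 by simp [Nat.factorial],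
      show ((576 : ℕ) : k) = 2 ^ 6 * 3 ^ 2 by norm_num]
    field_simp
    norm_num
  unfold transvectant
  rw [hw]
  simp only [Finset.sum_range_succ, Finset.sum_range_zero, Nat.reduceSub, Nat.reduceAdd,
    Function.iterate_succ, Function.iterate_zero, Function.comp, id, p08, p07, p06, p05, p04, p03,
    p02, p01, p18, p17, p16, p15, p14, p13, p12, p11, FF0_mul, FF_mul0, FF2_mul, FF4_mul, C_mul_FF,
    FF_add, zero_add]
  apply FF_congr5 <;>
  · simp only [v5, v9, Nat.reduceSub, Nat.reduceAdd, Nat.cast_zero, Nat.cast_one, Nat.cast_ofNat,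
      show Nat.choose 2 0 = 1 from rfl, show Nat.choose 2 1 = 2 from rfl, show Nat.choose 2 2 = 1 from rfl]
    field_simp
    ring

lemma tv444 (h2 : (2 : k) ≠ 0) (h3 : (3 : k) ≠ 0) (h5 : (5 : k) ≠ 0) (h7 : (7 : k) ≠ 0)
    (c d : ℕ → k) : transvectant 4 4 4 (FF 4 c) (FF 4 d) = FF 0 (fun _ => ((12 * c 4 * d 0 + (-3) * c 3 * d 1 + 2 * c 2 * d 2 + (-3) * c 1 * d 3 + 12 * c 0 * d 4) / (2 ^ 2 * 3 ^ 1))) := by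
  have hw : ((((4 - 4).factorial * (4 - 4).factorial : ℕ) : k) /
      ((4).factorial * (4).factorial : ℕ)) = 1 / (2 ^ 6 * 3 ^ 2) := by
    rw [show (4 - 4 : ℕ).factorial * (4 - 4 : ℕ).factorial = 1 by simp [Nat.factorial],
      show (4 : ℕ).factorial * (4 : ℕ).factorial = 576 by simp [Nat.factorial],
      show ((576 : ℕ) : k) = 2 ^ 6 * 3 ^ 2 by norm_num]
    field_simp
    norm_num
  unfold transvectant
  rw [hw]
  simp only [Finset.sum_range_succ, Finset.sum_range_zero, Nat.reduceSub, Nat.reduceAdd,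
    Function.iterate_succ, Function.iterate_zero, Function.comp, id, p08, p07, p06, p05, p04, p03,
    p02, p01, p18, p17, p16, p15, p14, p13, p12, p11, FF0_mul, FF_mul0, FF2_mul, FF4_mul, C_mul_FF,
    FF_add, zero_add]
  apply FF_congr0 <;>
  · simp only [v5, v9, Nat.reduceSub, Nat.reduceAdd, Nat.cast_zero, Nat.cast_one, Nat.cast_ofNat,
      show Nat.choose 4 0 = 1 from rfl, show Nat.choose 4 1 = 4 from rfl, show Nat.choose 4 2 = 6 from rfl, show Nat.choose 4 3 = 4 from rfl, show Nat.choose 4 4 = 1 from rfl]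
    field_simp
    ring

lemma tv888 (h2 : (2 : k) ≠ 0) (h3 : (3 : k) ≠ 0) (h5 : (5 : k) ≠ 0) (h7 : (7 : k) ≠ 0)
    (c d : ℕ → k) : transvectant 8 8 8 (FF 8 c) (FF 8 d) = FF 0 (fun _ => ((280 * c 8 * d 0 + (-35) * c 7 * d 1 + 10 * c 6 * d 2 + (-5) * c 5 * d 3 + 4 * c 4 * d 4 + (-5) * c 3 * d 5 + 10 * c 2 * d 6 + (-35) * c 1 * d 7 + 280 * c 0 * d 8) / (2 ^ 3 * 5 ^ 1 * 7 ^ 1))) := by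
  have hw : ((((8 - 8).factorial * (8 - 8).factorial : ℕ) : k) /
      ((8).factorial * (8).factorial : ℕ)) = 1 / (2 ^ 14 * 3 ^ 4 * 5 ^ 2 * 7 ^ 2) := by
    rw [show (8 - 8 : ℕ).factorial * (8 - 8 : ℕ).factorial = 1 by simp [Nat.factorial],
      show (8 : ℕ).factorial * (8 : ℕ).factorial = 1625702400 by simp [Nat.factorial],
      show ((1625702400 : ℕ) : k) = 2 ^ 14 * 3 ^ 4 * 5 ^ 2 * 7 ^ 2 by norm_num]
    field_simp
    norm_num
  unfold transvectant
  rw [hw]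
  simp only [Finset.sum_range_succ, Finset.sum_range_zero, Nat.reduceSub, Nat.reduceAdd,
    Function.iterate_succ, Function.iterate_zero, Function.comp, id, p08, p07, p06, p05, p04, p03,
    p02, p01, p18, p17, p16, p15, p14, p13, p12, p11, FF0_mul, FF_mul0, FF2_mul, FF4_mul, C_mul_FF,
    FF_add, zero_add]
  apply FF_congr0 <;>
  · simp only [v5, v9, Nat.reduceSub, Nat.reduceAdd, Nat.cast_zero, Nat.cast_one, Nat.cast_ofNat,
      show Nat.choose 8 0 = 1 from rfl, show Nat.choose 8 1 = 8 from rfl, show Nat.choose 8 2 = 28 from rfl, show Nat.choose 8 3 = 56 from rfl, show Nat.choose 8 4 = 70 from rfl, show Nat.choose 8 5 = 56 from rfl, show Nat.choose 8 6 = 28 from rfl, show Nat.choose 8 7 = 8 from rfl, show Nat.choose 8 8 = 1 from rfl]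
    field_simp
    ring

lemma tv886 (h2 : (2 : k) ≠ 0) (h3 : (3 : k) ≠ 0) (h5 : (5 : k) ≠ 0) (h7 : (7 : k) ≠ 0)
    (c d : ℕ → k) : transvectant 8 8 6 (FF 8 c) (FF 8 d) = FF 4 (v5
      ((56 * c 6 * d 0 + (-21) * c 5 * d 1 + 12 * c 4 * d 2 + (-10) * c 3 * d 3 + 12 * c 2 * d 4 + (-21) * c 1 * d 5 + 56 * c 0 * d 6) / (2 ^ 5 * 7 ^ 2))
      (((-35) * c 6 * d 1 + 196 * c 7 * d 0 + 9 * c 5 * d 2 + (-2) * c 4 * d 3 + (-2) * c 3 * d 4 + 9 * c 2 * d 5 + (-35) * c 1 * d 6 + 196 * c 0 * d 7) / (2 ^ 4 * 7 ^ 2))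
      (((-16) * c 6 * d 2 + (-49) * c 7 * d 1 + 1568 * c 8 * d 0 + 17 * c 5 * d 3 + (-16) * c 4 * d 4 + 17 * c 3 * d 5 + (-16) * c 2 * d 6 + (-49) * c 1 * d 7 + 1568 * c 0 * d 8) / (2 ^ 5 * 7 ^ 2))
      (((-35) * c 7 * d 2 + 196 * c 8 * d 1 + 9 * c 6 * d 3 + (-2) * c 5 * d 4 + (-2) * c 4 * d 5 + 9 * c 3 * d 6 + (-35) * c 2 * d 7 + 196 * c 1 * d 8) / (2 ^ 4 * 7 ^ 2))
      ((56 * c 8 * d 2 + (-21) * c 7 * d 3 + 12 * c 6 * d 4 + (-10) * c 5 * d 5 + 12 * c 4 * d 6 + (-21) * c 3 * d 7 + 56 * c 2 * d 8) / (2 ^ 5 * 7 ^ 2))) := by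
  have hw : ((((8 - 6).factorial * (8 - 6).factorial : ℕ) : k) /
      ((8).factorial * (8).factorial : ℕ)) = 1 / (2 ^ 12 * 3 ^ 4 * 5 ^ 2 * 7 ^ 2) := by
    rw [show (8 - 6 : ℕ).factorial * (8 - 6 : ℕ).factorial = 4 by simp [Nat.factorial],
      show (8 : ℕ).factorial * (8 : ℕ).factorial = 1625702400 by simp [Nat.factorial],
      show ((1625702400 : ℕ) : k) = 2 ^ 14 * 3 ^ 4 * 5 ^ 2 * 7 ^ 2 by norm_num]
    field_simp
    norm_num
  unfold transvectant
  rw [hw]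
  simp only [Finset.sum_range_succ, Finset.sum_range_zero, Nat.reduceSub, Nat.reduceAdd,
    Function.iterate_succ, Function.iterate_zero, Function.comp, id, p08, p07, p06, p05, p04, p03,
    p02, p01, p18, p17, p16, p15, p14, p13, p12, p11, FF0_mul, FF_mul0, FF2_mul, FF4_mul, C_mul_FF,
    FF_add, zero_add]
  apply FF_congr5 <;>
  · simp only [v5, v9, Nat.reduceSub, Nat.reduceAdd, Nat.cast_zero, Nat.cast_one, Nat.cast_ofNat,
      show Nat.choose 6 0 = 1 from rfl, show Nat.choose 6 1 = 6 from rfl, show Nat.choose 6 2 = 15 from rfl, show Nat.choose 6 3 = 20 from rfl, show Nat.choose 6 4 = 15 from rfl, show Nat.choose 6 5 = 6 from rfl, show Nat.choose 6 6 = 1 from rfl]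
    field_simp
    ring

lemma tv884 (h2 : (2 : k) ≠ 0) (h3 : (3 : k) ≠ 0) (h5 : (5 : k) ≠ 0) (h7 : (7 : k) ≠ 0)
    (c d : ℕ → k) : transvectant 8 8 4 (FF 8 c) (FF 8 d) = FF 8 (v9
      ((56 * c 4 * d 0 + (-35) * c 3 * d 1 + 30 * c 2 * d 2 + (-35) * c 1 * d 3 + 56 * c 0 * d 4) / (2 ^ 4 * 5 ^ 1 * 7 ^ 2))
      (((-21) * c 4 * d 1 + 70 * c 5 * d 0 + 5 * c 3 * d 2 + 5 * c 2 * d 3 + (-21) * c 1 * d 4 + 70 * c 0 * d 5) / (2 ^ 2 * 5 ^ 1 * 7 ^ 2))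
      (((-22) * c 4 * d 2 + (-35) * c 5 * d 1 + 420 * c 6 * d 0 + 30 * c 3 * d 3 + (-22) * c 2 * d 4 + (-35) * c 1 * d 5 + 420 * c 0 * d 6) / (2 ^ 3 * 5 ^ 1 * 7 ^ 2))
      ((9 * c 4 * d 3 + (-30) * c 5 * d 2 + 35 * c 6 * d 1 + 490 * c 7 * d 0 + 9 * c 3 * d 4 + (-30) * c 2 * d 5 + 35 * c 1 * d 6 + 490 * c 0 * d 7) / (2 ^ 2 * 5 ^ 1 * 7 ^ 2))
      ((72 * c 4 * d 4 + (-45) * c 5 * d 3 + (-110) * c 6 * d 2 + 735 * c 7 * d 1 + 3920 * c 8 * d 0 + (-45) * c 3 * d 5 + (-110) * c 2 * d 6 + 735 * c 1 * d 7 + 3920 * c 0 * d 8) / (2 ^ 4 * 5 ^ 1 * 7 ^ 2))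
      ((9 * c 5 * d 4 + (-30) * c 6 * d 3 + 35 * c 7 * d 2 + 490 * c 8 * d 1 + 9 * c 4 * d 5 + (-30) * c 3 * d 6 + 35 * c 2 * d 7 + 490 * c 1 * d 8) / (2 ^ 2 * 5 ^ 1 * 7 ^ 2))
      (((-22) * c 6 * d 4 + (-35) * c 7 * d 3 + 420 * c 8 * d 2 + 30 * c 5 * d 5 + (-22) * c 4 * d 6 + (-35) * c 3 * d 7 + 420 * c 2 * d 8) / (2 ^ 3 * 5 ^ 1 * 7 ^ 2))
      (((-21) * c 7 * d 4 + 70 * c 8 * d 3 + 5 * c 6 * d 5 + 5 * c 5 * d 6 + (-21) * c 4 * d 7 + 70 * c 3 * d 8) / (2 ^ 2 * 5 ^ 1 * 7 ^ 2))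
      ((56 * c 8 * d 4 + (-35) * c 7 * d 5 + 30 * c 6 * d 6 + (-35) * c 5 * d 7 + 56 * c 4 * d 8) / (2 ^ 4 * 5 ^ 1 * 7 ^ 2))) := by
  have hw : ((((8 - 4).factorial * (8 - 4).factorial : ℕ) : k) /
      ((8).factorial * (8).factorial : ℕ)) = 1 / (2 ^ 8 * 3 ^ 2 * 5 ^ 2 * 7 ^ 2) := by
    rw [show (8 - 4 : ℕ).factorial * (8 - 4 : ℕ).factorial = 576 by simp [Nat.factorial],
      show (8 : ℕ).factorial * (8 : ℕ).factorial = 1625702400 by simp [Nat.factorial],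
      show ((1625702400 : ℕ) : k) = 2 ^ 14 * 3 ^ 4 * 5 ^ 2 * 7 ^ 2 by norm_num]
    field_simp
    norm_num
  unfold transvectant
  rw [hw]
  simp only [Finset.sum_range_succ, Finset.sum_range_zero, Nat.reduceSub, Nat.reduceAdd,
    Function.iterate_succ, Function.iterate_zero, Function.comp, id, p08, p07, p06, p05, p04, p03,
    p02, p01, p18, p17, p16, p15, p14, p13, p12, p11, FF0_mul, FF_mul0, FF2_mul, FF4_mul, C_mul_FF,
    FF_add, zero_add]
  apply FF_congr9 <;>
  · simp only [v5, v9, Nat.reduceSub, Nat.reduceAdd, Nat.cast_zero, Nat.cast_one, Nat.cast_ofNat,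
      show Nat.choose 4 0 = 1 from rfl, show Nat.choose 4 1 = 4 from rfl, show Nat.choose 4 2 = 6 from rfl, show Nat.choose 4 3 = 4 from rfl, show Nat.choose 4 4 = 1 from rfl]
    field_simp
    ring

lemma sbU4 (q : k) (c : ℕ → k) : sb 1 q 0 1 (FF 4 c) = FF 4 (v5
    (c 0 + q * c 1 + q ^ 2 * c 2 + q ^ 3 * c 3 + q ^ 4 * c 4)
    (c 1 + 2 * q * c 2 + 3 * q ^ 2 * c 3 + 4 * q ^ 3 * c 4)
    (c 2 + 3 * q * c 3 + 6 * q ^ 2 * c 4)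
    (c 3 + 4 * q * c 4)
    (c 4)) := by
  simp only [FF, Finset.sum_range_succ, Finset.sum_range_zero, v5, sb, map_add, map_mul, map_pow,
    map_ofNat, map_neg, aeval_X, algHom_C, algebraMap_eq, Matrix.cons_val_zero,
    Matrix.cons_val_one, map_one, map_zero]
  ring

lemma sbL4 (q : k) (c : ℕ → k) : sb 1 0 q 1 (FF 4 c) = FF 4 (v5
    (c 0)
    (4 * q * c 0 + c 1)
    (6 * q ^ 2 * c 0 + 3 * q * c 1 + c 2)
    (4 * q ^ 3 * c 0 + 3 * q ^ 2 * c 1 + 2 * q * c 2 + c 3)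
    (q ^ 4 * c 0 + q ^ 3 * c 1 + q ^ 2 * c 2 + q * c 3 + c 4)) := by
  simp only [FF, Finset.sum_range_succ, Finset.sum_range_zero, v5, sb, map_add, map_mul, map_pow,
    map_ofNat, map_neg, aeval_X, algHom_C, algebraMap_eq, Matrix.cons_val_zero,
    Matrix.cons_val_one, map_one, map_zero]
  ring

lemma sbS4 (c : ℕ → k) : sb 0 1 (-1) 0 (FF 4 c) = FF 4 (v5
    (c 4)
    (-c 3)
    (c 2)
    (-c 1)
    (c 0)) := by
  simp only [FF, Finset.sum_range_succ, Finset.sum_range_zero, v5, sb, map_add, map_mul, map_pow,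
    map_ofNat, map_neg, aeval_X, algHom_C, algebraMap_eq, Matrix.cons_val_zero,
    Matrix.cons_val_one, map_one, map_zero]
  ring

lemma sbU8 (q : k) (c : ℕ → k) : sb 1 q 0 1 (FF 8 c) = FF 8 (v9
    (c 0 + q * c 1 + q ^ 2 * c 2 + q ^ 3 * c 3 + q ^ 4 * c 4 + q ^ 5 * c 5 + q ^ 6 * c 6 + q ^ 7 * c 7 + q ^ 8 * c 8)
    (c 1 + 2 * q * c 2 + 3 * q ^ 2 * c 3 + 4 * q ^ 3 * c 4 + 5 * q ^ 4 * c 5 + 6 * q ^ 5 * c 6 + 7 * q ^ 6 * c 7 + 8 * q ^ 7 * c 8)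
    (c 2 + 3 * q * c 3 + 6 * q ^ 2 * c 4 + 10 * q ^ 3 * c 5 + 15 * q ^ 4 * c 6 + 21 * q ^ 5 * c 7 + 28 * q ^ 6 * c 8)
    (c 3 + 4 * q * c 4 + 10 * q ^ 2 * c 5 + 20 * q ^ 3 * c 6 + 35 * q ^ 4 * c 7 + 56 * q ^ 5 * c 8)
    (c 4 + 5 * q * c 5 + 15 * q ^ 2 * c 6 + 35 * q ^ 3 * c 7 + 70 * q ^ 4 * c 8)
    (c 5 + 6 * q * c 6 + 21 * q ^ 2 * c 7 + 56 * q ^ 3 * c 8)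
    (c 6 + 7 * q * c 7 + 28 * q ^ 2 * c 8)
    (c 7 + 8 * q * c 8)
    (c 8)) := by
  simp only [FF, Finset.sum_range_succ, Finset.sum_range_zero, v9, sb, map_add, map_mul, map_pow,
    map_ofNat, map_neg, aeval_X, algHom_C, algebraMap_eq, Matrix.cons_val_zero,
    Matrix.cons_val_one, map_one, map_zero]
  ring

lemma sbL8 (q : k) (c : ℕ → k) : sb 1 0 q 1 (FF 8 c) = FF 8 (v9
    (c 0)
    (8 * q * c 0 + c 1)
    (28 * q ^ 2 * c 0 + 7 * q * c 1 + c 2)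
    (56 * q ^ 3 * c 0 + 21 * q ^ 2 * c 1 + 6 * q * c 2 + c 3)
    (70 * q ^ 4 * c 0 + 35 * q ^ 3 * c 1 + 15 * q ^ 2 * c 2 + 5 * q * c 3 + c 4)
    (56 * q ^ 5 * c 0 + 35 * q ^ 4 * c 1 + 20 * q ^ 3 * c 2 + 10 * q ^ 2 * c 3 + 4 * q * c 4 + c 5)
    (28 * q ^ 6 * c 0 + 21 * q ^ 5 * c 1 + 15 * q ^ 4 * c 2 + 10 * q ^ 3 * c 3 + 6 * q ^ 2 * c 4 + 3 * q * c 5 + c 6)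
    (8 * q ^ 7 * c 0 + 7 * q ^ 6 * c 1 + 6 * q ^ 5 * c 2 + 5 * q ^ 4 * c 3 + 4 * q ^ 3 * c 4 + 3 * q ^ 2 * c 5 + 2 * q * c 6 + c 7)
    (q ^ 8 * c 0 + q ^ 7 * c 1 + q ^ 6 * c 2 + q ^ 5 * c 3 + q ^ 4 * c 4 + q ^ 3 * c 5 + q ^ 2 * c 6 + q * c 7 + c 8)) := by
  simp only [FF, Finset.sum_range_succ, Finset.sum_range_zero, v9, sb, map_add, map_mul, map_pow,
    map_ofNat, map_neg, aeval_X, algHom_C, algebraMap_eq, Matrix.cons_val_zero,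
    Matrix.cons_val_one, map_one, map_zero]
  ring

lemma sbS8 (c : ℕ → k) : sb 0 1 (-1) 0 (FF 8 c) = FF 8 (v9
    (c 8)
    (-c 7)
    (c 6)
    (-c 5)
    (c 4)
    (-c 3)
    (c 2)
    (-c 1)
    (c 0)) := by
  simp only [FF, Finset.sum_range_succ, Finset.sum_range_zero, v9, sb, map_add, map_mul, map_pow,
    map_ofNat, map_neg, aeval_X, algHom_C, algebraMap_eq, Matrix.cons_val_zero,
    Matrix.cons_val_one, map_one, map_zero]
  ring

lemma aux_zero (A p B : k) (hA : A ≠ 0) (hB : B ≠ 0) (h : A * (p / B) = 0) : p = 0 := by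
  rcases mul_eq_zero.1 h with h | h
  · exact absurd h hA
  · exact (div_eq_zero_iff.1 h).resolve_right hB

section Q
variable (h2 : (2 : k) ≠ 0) (h3 : (3 : k) ≠ 0) (h5 : (5 : k) ≠ 0) (h7 : (7 : k) ≠ 0)

/-- the goal -/
def Goal (a : Fin 9 → k) : Prop :=
  J8 a * (-(10125 : k) * J8 a + 1075648 * J2 a ^ 4 - 42336 * J3 a ^ 2 * J2 a) = 0

lemma final_alg (h2 : (2 : k) ≠ 0) (h3 : (3 : k) ≠ 0) (h5 : (5 : k) ≠ 0) (h7 : (7 : k) ≠ 0)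
    (a0 a3 a4 a5 a6 a7 a8 c : k) (ha0 : a0 ≠ 0) (ha5 : a5 ≠ 0)
    (e0 : 56 * (a0 * a6) = 5 * a3 ^ 2) (e1 : 98 * (a0 * a7) = a3 * a4)
    (e2 : 1568 * (a0 * a8) = 8 * a4 ^ 2 - 17 * (a3 * a5))
    (e3 : 392 * c = 9 * a3 * a6 - 2 * a4 * a5)
    (e4 : 12 * a4 * a6 - 21 * a3 * a7 = 5 * a5 ^ 2) :
    -(10125 : k) * (2 ^ 11 * 3 * 5 ^ 2 * 7 ^ 8 * (a0 * a5 * c ^ 3)) +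
    1075648 * (280 * (a0 * a8) - 5 * (a3 * a5) + 2 * a4 ^ 2) ^ 4 -
    42336 * (3920 * a0 * a4 * a8 - 2450 * a0 * a5 * a7 + 1050 * a0 * a6 ^ 2 + 75 * a3 ^ 2 * a6
      - 45 * a3 * a4 * a5 + 12 * a4 ^ 3) ^ 2 *
      (280 * (a0 * a8) - 5 * (a3 * a5) + 2 * a4 ^ 2) = 0 := by
  have h56 : (56 : k) = 2 ^ 3 * 7 := by norm_num
  have h98 : (98 : k) = 2 * 7 ^ 2 := by norm_num
  have h1568 : (1568 : k) = 2 ^ 5 * 7 ^ 2 := by norm_num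
  have h392 : (392 : k) = 2 ^ 3 * 7 ^ 2 := by norm_num
  rw [h56] at e0; rw [h98] at e1; rw [h1568] at e2; rw [h392] at e3
  have f6 : a6 = 5 * a3 ^ 2 / (2 ^ 3 * 7 * a0) := by field_simp; linear_combination e0
  have f7 : a7 = a3 * a4 / (2 * 7 ^ 2 * a0) := by field_simp; linear_combination e1
  have f8 : a8 = (8 * a4 ^ 2 - 17 * (a3 * a5)) / (2 ^ 5 * 7 ^ 2 * a0) := by
    field_simp; linear_combination e2
  have f4 : 6 * a3 ^ 2 * a4 = 35 * a0 * a5 ^ 2 := by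
    rw [f6, f7] at e4
    field_simp at e4
    apply mul_left_cancel₀ (mul_ne_zero (pow_ne_zero 3 h2) h7)
    linear_combination e4
  have ha3 : a3 ≠ 0 := by
    rintro rfl
    have : (5 : k) * 7 * (a0 * a5 ^ 2) = 0 := by linear_combination -f4
    simp [h5, h7, ha0, ha5] at this
  have f4 : a4 = 5 * 7 * a0 * a5 ^ 2 / (2 * 3 * a3 ^ 2) := by
    field_simp; linear_combination f4
  have f3 : c = (9 * a3 * a6 - 2 * a4 * a5) / (2 ^ 3 * 7 ^ 2) := by
    field_simp; linear_combination e3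
  rw [f3, f8, f7, f6, f4]
  field_simp
  ring

lemma covk_FF (h2 : (2 : k) ≠ 0) (h3 : (3 : k) ≠ 0) (h5 : (5 : k) ≠ 0) (h7 : (7 : k) ≠ 0)
    (a : Fin 9 → k) : ∃ x0 x1 x2 x3 x4, covk a = FF 4 (v5 x0 x1 x2 x3 x4) := by
  unfold covk
  rw [oct_FF, tv886 h2 h3 h5 h7]
  exact ⟨_, _, _, _, _, rfl⟩

lemma final (h2 : (2 : k) ≠ 0) (h3 : (3 : k) ≠ 0) (h5 : (5 : k) ≠ 0) (h7 : (7 : k) ≠ 0)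
    (a : Fin 9 → k) (c : k) (hc : c ≠ 0) (hκ : covk a = FF 4 (v5 0 0 0 c 0))
    (H5 : J5 a = 0) (H7 : J7 a = 0) : Goal a := by
  have hh : covh a = FF 4 (v5 0 0 0 0 (-c ^ 2 / 2 ^ 3)) := by
    unfold covh
    rw [hκ, tv442 h2 h3 h5 h7]
    apply FF_congr5 <;> simp only [v5] <;> field_simp <;> ring
  have h1 : a 1 = 0 := by
    unfold J7 covm at H7
    rw [hκ, hh, oct_FF, tv844 h2 h3 h5 h7, tv444 h2 h3 h5 h7, cc_FF0] at H7
    simp only [v5, v9] at H7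
    have : (2 ^ 8 * 3 * 5 * 7 ^ 7 : k) * (a 1 * c ^ 3) = 0 := by
      rw [← H7]; field_simp; ring
    simpa [h2, h3, h5, h7, hc] using this
  have h2' : a 2 = 0 := by
    unfold J5 covm at H5
    rw [hκ, oct_FF, tv844 h2 h3 h5 h7, tv444 h2 h3 h5 h7, cc_FF0] at H5
    simp only [v5, v9] at H5
    have : (2 ^ 7 * 5 * 7 ^ 4 : k) * (a 2 * c ^ 2) = 0 := by
      rw [← H5]; field_simp; ring
    simpa [h2, h3, h5, h7, hc] using this
  have hκ' := hκ
  unfold covk at hκ'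
  rw [oct_FF, tv886 h2 h3 h5 h7] at hκ'
  have e0 := FF_inj 4 _ _ hκ' 0 (by norm_num)
  have e1 := FF_inj 4 _ _ hκ' 1 (by norm_num)
  have e2 := FF_inj 4 _ _ hκ' 2 (by norm_num)
  have e3 := FF_inj 4 _ _ hκ' 3 (by norm_num)
  have e4 := FF_inj 4 _ _ hκ' 4 (by norm_num)
  simp only [v5, v9, h1, h2'] at e0 e1 e2 e3 e4
  have hJ8 : J8 a = 2 ^ 11 * 3 * 5 ^ 2 * 7 ^ 8 * (a 0 * a 5 * c ^ 3) := by
    unfold J8 covp covg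
    rw [hκ, hh, oct_FF, tv884 h2 h3 h5 h7, tv844 h2 h3 h5 h7, tv444 h2 h3 h5 h7, cc_FF0]
    simp only [v5, v9, h1, h2']
    field_simp
    ring
  have hJ2 : J2 a = 280 * (a 0 * a 8) - 5 * (a 3 * a 5) + 2 * a 4 ^ 2 := by
    unfold J2
    rw [oct_FF, tv888 h2 h3 h5 h7, cc_FF0]
    simp only [v5, v9, h1, h2']
    field_simp
    ring
  have hJ3 : J3 a = 3920 * a 0 * a 4 * a 8 - 2450 * a 0 * a 5 * a 7 + 1050 * a 0 * a 6 ^ 2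
      + 75 * a 3 ^ 2 * a 6 - 45 * a 3 * a 4 * a 5 + 12 * a 4 ^ 3 := by
    unfold J3 covg
    rw [oct_FF, tv884 h2 h3 h5 h7, tv888 h2 h3 h5 h7, cc_FF0]
    simp only [v5, v9, h1, h2']
    field_simp
    ring
  unfold Goal
  by_cases hz : a 0 * a 5 = 0
  · rw [hJ8, hz]; ring
  rw [hJ8, hJ2, hJ3]
  refine mul_eq_zero_of_right _ ?_
  field_simp at e0 e1 e2 e3 e4
  refine final_alg h2 h3 h5 h7 _ _ _ _ _ _ _ _ (left_ne_zero_of_mul hz) (right_ne_zero_of_mul hz)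
    ?_ ?_ ?_ ?_ ?_
  · apply mul_left_cancel₀ h2; linear_combination e0
  · apply mul_left_cancel₀ (pow_ne_zero 2 h2); linear_combination e1
  · apply mul_left_cancel₀ h2; linear_combination e2
  · apply mul_left_cancel₀ h2; linear_combination -e3
  · apply mul_left_cancel₀ h2; linear_combination e4

lemma transfer (p q r s : k) (hd : p * s - q * r = 1) (a b : Fin 9 → k)
    (hab : octForm b = sb p q r s (octForm a)) (h : Goal b) : Goal a := by
  obtain ⟨-, -, e2, e3, -, -, -, -, e8⟩ := J_inv p q r s hd a b hab
  unfold Goal at *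
  rwa [e2, e3, e8] at h

lemma oct_ex (c : ℕ → k) : ∃ b : Fin 9 → k, octForm b = FF 8 c :=
  ⟨fun i => c i, by rw [oct_FF]; exact FF_congr9 _ _ rfl rfl rfl rfl rfl rfl rfl rfl rfl⟩

lemma stepB (h2 : (2 : k) ≠ 0) (h3 : (3 : k) ≠ 0) (h5 : (5 : k) ≠ 0) (h7 : (7 : k) ≠ 0)
    (a : Fin 9 → k) (c d : k) (hc : c ≠ 0) (hκ : covk a = FF 4 (v5 0 0 0 c d))
    (H5 : J5 a = 0) (H7 : J7 a = 0) : Goal a := by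
  have hd : (1 : k) * 1 - 0 * (-d / c) = 1 := by ring
  obtain ⟨b, hb⟩ : ∃ b : Fin 9 → k, octForm b = sb 1 0 (-d / c) 1 (octForm a) := by
    rw [oct_FF, sbL8]; exact oct_ex _
  apply transfer _ _ _ _ hd a b hb
  obtain ⟨ek, -, -, -, -, e5, -, e7, -⟩ := J_inv _ _ _ _ hd a b hb
  apply final h2 h3 h5 h7 b c hc _ (e5.trans H5) (e7.trans H7)
  rw [ek, hκ, sbL4]
  apply FF_congr5 <;> simp only [v5] <;> field_simp <;> ring

lemma inv_quartic (h2 : (2 : k) ≠ 0) (h3 : (3 : k) ≠ 0) (h5 : (5 : k) ≠ 0) (h7 : (7 : k) ≠ 0)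
    (a : Fin 9 → k) (x0 x1 x2 x3 x4 : k) (hκ : covk a = FF 4 (v5 x0 x1 x2 x3 x4)) :
    (J4 a = 0 → 12 * x4 * x0 - 3 * x3 * x1 + x2 ^ 2 = 0) ∧
    (J6 a = 0 → 72 * x0 * x2 * x4 - 27 * x1 ^ 2 * x4 + 9 * x1 * x2 * x3 - 27 * x0 * x3 ^ 2
      - 2 * x2 ^ 3 = 0) ∧
    covh a = FF 4 (v5 ((8 * x0 * x2 - 3 * x1 ^ 2) / (2 ^ 3 * 3)) ((6 * x0 * x3 - x1 * x2) / (2 * 3))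
      ((24 * x0 * x4 + 3 * x1 * x3 - 2 * x2 ^ 2) / (2 ^ 2 * 3)) ((6 * x1 * x4 - x2 * x3) / (2 * 3))
      ((8 * x2 * x4 - 3 * x3 ^ 2) / (2 ^ 3 * 3))) := by
  have hh : covh a = FF 4 (v5 ((8 * x0 * x2 - 3 * x1 ^ 2) / (2 ^ 3 * 3)) ((6 * x0 * x3 - x1 * x2) / (2 * 3))
      ((24 * x0 * x4 + 3 * x1 * x3 - 2 * x2 ^ 2) / (2 ^ 2 * 3)) ((6 * x1 * x4 - x2 * x3) / (2 * 3))
      ((8 * x2 * x4 - 3 * x3 ^ 2) / (2 ^ 3 * 3))) := by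
    unfold covh
    rw [hκ, tv442 h2 h3 h5 h7]
    apply FF_congr5 <;> simp only [v5] <;> field_simp <;> ring
  refine ⟨fun H => ?_, fun H => ?_, hh⟩
  · unfold J4 at H
    rw [hκ, tv444 h2 h3 h5 h7, cc_FF0] at H
    simp only [v5] at H
    have : (2 ^ 8 * 7 ^ 4 : k) * (12 * x4 * x0 - 3 * x3 * x1 + x2 ^ 2) = 0 := by
      rw [← H]; field_simp; ring
    simpa [h2, h3, h5, h7] using this
  · unfold J6 at H
    rw [hκ, hh, tv444 h2 h3 h5 h7, cc_FF0] at H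
    simp only [v5] at H
    have : (2 ^ 11 * 7 ^ 6 : k) * (72 * x0 * x2 * x4 - 27 * x1 ^ 2 * x4 + 9 * x1 * x2 * x3
        - 27 * x0 * x3 ^ 2 - 2 * x2 ^ 3) = 0 := by
      rw [← H]; field_simp; ring
    simpa [h2, h3, h5, h7] using this

lemma quart1 (h2 : (2 : k) ≠ 0) (h3 : (3 : k) ≠ 0) (x0 x1 x2 x3 x4 : k)
    (hI : 12 * x4 * x0 - 3 * x3 * x1 + x2 ^ 2 = 0)
    (hJ : 72 * x0 * x2 * x4 - 27 * x1 ^ 2 * x4 + 9 * x1 * x2 * x3 - 27 * x0 * x3 ^ 2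
      - 2 * x2 ^ 3 = 0)
    (h : 6 * x1 * x4 - x2 * x3 = 0) (hn : 8 * x2 * x4 - 3 * x3 ^ 2 ≠ 0) :
    x0 = 0 ∧ x1 = 0 ∧ x2 = 0 ∧ x3 ≠ 0 := by
  by_cases h4 : x4 = 0
  · subst h4
    have hx3 : x3 ≠ 0 := by rintro rfl; apply hn; ring
    have hx2 : x2 = 0 := by
      have : x2 * x3 = 0 := by linear_combination -h
      simpa [hx3] using this
    subst hx2
    have hx1 : x1 = 0 := by
      have : 3 * (x3 * x1) = 0 := by linear_combination -hI
      simpa [hx3, h3] using this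
    subst hx1
    refine ⟨?_, rfl, rfl, hx3⟩
    have : 3 ^ 3 * (x0 * x3 ^ 2) = 0 := by linear_combination -hJ
    simpa [hx3, h3] using this
  · have f1 : x1 = x2 * x3 / (2 * 3 * x4) := by field_simp; linear_combination h
    have f0 : x0 = (3 * x3 * x1 - x2 ^ 2) / (2 ^ 2 * 3 * x4) := by
      field_simp; linear_combination hI
    have hx2 : x2 = 0 := by
      have : x2 * (8 * x2 * x4 - 3 * x3 ^ 2) ^ 2 = 0 := by
        have e : x2 * (8 * x2 * x4 - 3 * x3 ^ 2) ^ 2 = - (2 ^ 3 * x4 ^ 2) * 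
         (72 * x0 * x2 * x4 - 27 * x1 ^ 2 * x4 + 9 * x1 * x2 * x3 - 27 * x0 * x3 ^ 2
      - 2 * x2 ^ 3) := by
          rw [f0, f1]; field_simp; ring
        rw [e, hJ]; ring
      simpa [hn] using this
    subst hx2
    have hx1 : x1 = 0 := by rw [f1]; simp
    subst hx1
    refine ⟨by rw [f0]; simp, rfl, rfl, ?_⟩
    rintro rfl
    apply hn; ring

lemma quart2 (h2 : (2 : k) ≠ 0) (h3 : (3 : k) ≠ 0) (x0 x1 x2 x3 x4 : k)
    (hI : 12 * x4 * x0 - 3 * x3 * x1 + x2 ^ 2 = 0)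
    (hJ : 72 * x0 * x2 * x4 - 27 * x1 ^ 2 * x4 + 9 * x1 * x2 * x3 - 27 * x0 * x3 ^ 2
      - 2 * x2 ^ 3 = 0)
    (hn : 8 * x2 * x4 - 3 * x3 ^ 2 = 0) :
    6 * x1 * x4 - x2 * x3 = 0 ∧ 24 * x0 * x4 + 3 * x1 * x3 - 2 * x2 ^ 2 = 0 ∧
      6 * x0 * x3 - x1 * x2 = 0 := by
  by_cases h4 : x4 = 0
  · subst h4
    have hx3 : x3 = 0 := by
      have : 3 * x3 ^ 2 = 0 := by linear_combination -hn
      simpa [h3] using this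
    subst hx3
    have hx2 : x2 = 0 := by
      have : x2 ^ 2 = 0 := by linear_combination hI
      simpa using this
    subst hx2
    refine ⟨?_, ?_, ?_⟩ <;> ring
  · have f2 : x2 = 3 * x3 ^ 2 / (2 ^ 3 * x4) := by field_simp; linear_combination hn
    have f0 : x0 = (3 * x3 * x1 - x2 ^ 2) / (2 ^ 2 * 3 * x4) := by
      field_simp; linear_combination hI
    have hx : 2 ^ 4 * x1 * x4 ^ 2 - x3 ^ 3 = 0 := by
      have : (2 ^ 4 * x1 * x4 ^ 2 - x3 ^ 3) ^ 2 = 0 := by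
        have e : 3 ^ 3 * (2 ^ 4 * x1 * x4 ^ 2 - x3 ^ 3) ^ 2 = - (2 ^ 8 * x4 ^ 3) * 
         (72 * x0 * x2 * x4 - 27 * x1 ^ 2 * x4 + 9 * x1 * x2 * x3 - 27 * x0 * x3 ^ 2
      - 2 * x2 ^ 3) := by
          rw [f0, f2]; field_simp; ring
        rw [hJ, mul_zero] at e
        simpa [h3] using e
      simpa using this
    have f1 : x1 = x3 ^ 3 / (2 ^ 4 * x4 ^ 2) := by field_simp; linear_combination hx
    rw [f0, f2, f1]
    refine ⟨?_, ?_, ?_⟩ <;> field_simp <;> ring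

lemma stepA (h2 : (2 : k) ≠ 0) (h3 : (3 : k) ≠ 0) (h5 : (5 : k) ≠ 0) (h7 : (7 : k) ≠ 0)
    (a : Fin 9 → k) (x0 x1 x2 x3 x4 : k) (hκ : covk a = FF 4 (v5 x0 x1 x2 x3 x4))
    (hn : 8 * x2 * x4 - 3 * x3 ^ 2 ≠ 0)
    (H4 : J4 a = 0) (H5 : J5 a = 0) (H6 : J6 a = 0) (H7 : J7 a = 0) : Goal a := by
  obtain ⟨q, hq⟩ : ∃ q, q * (8 * x2 * x4 - 3 * x3 ^ 2) = -(6 * x1 * x4 - x2 * x3) :=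
    ⟨-(6 * x1 * x4 - x2 * x3) / (8 * x2 * x4 - 3 * x3 ^ 2), div_mul_cancel₀ _ hn⟩
  have hd : (1 : k) * 1 - q * 0 = 1 := by ring
  obtain ⟨b, hb⟩ : ∃ b : Fin 9 → k, octForm b = sb 1 q 0 1 (octForm a) := by
    rw [oct_FF, sbU8]; exact oct_ex _
  apply transfer _ _ _ _ hd a b hb
  obtain ⟨ek, -, -, -, e4, e5, e6, e7, -⟩ := J_inv _ _ _ _ hd a b hb
  rw [hκ, sbU4] at ek
  simp only [v5] at ek
  obtain ⟨i4, i6, -⟩ := inv_quartic h2 h3 h5 h7 b _ _ _ _ _ ek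
  obtain ⟨y0, y1, y2, y3⟩ := quart1 h2 h3 _ _ _ _ _ (i4 (e4.trans H4)) (i6 (e6.trans H6))
    (by linear_combination hq) (by convert hn using 1; ring)
  rw [y0, y1, y2] at ek
  exact stepB h2 h3 h5 h7 b _ _ y3 ek (e5.trans H5) (e7.trans H7)

lemma main_goal (h2 : (2 : k) ≠ 0) (h3 : (3 : k) ≠ 0) (h5 : (5 : k) ≠ 0) (h7 : (7 : k) ≠ 0)
    (a : Fin 9 → k)
    (H4 : J4 a = 0) (H5 : J5 a = 0) (H6 : J6 a = 0) (H7 : J7 a = 0) : Goal a := by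
  obtain ⟨x0, x1, x2, x3, x4, hκ⟩ := covk_FF h2 h3 h5 h7 a
  by_cases hn : 8 * x2 * x4 - 3 * x3 ^ 2 = 0
  swap
  · exact stepA h2 h3 h5 h7 a _ _ _ _ _ hκ hn H4 H5 H6 H7
  by_cases hn' : 8 * x0 * x2 - 3 * x1 ^ 2 = 0
  · obtain ⟨i4, i6, hh⟩ := inv_quartic h2 h3 h5 h7 a _ _ _ _ _ hκ
    obtain ⟨z3, z2, z1⟩ := quart2 h2 h3 _ _ _ _ _ (i4 H4) (i6 H6) hn
    rw [hn, hn', z1, z2, z3] at hh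
    have : J8 a = 0 := by
      unfold J8 covp covg
      rw [hκ, hh, oct_FF, tv884 h2 h3 h5 h7, tv844 h2 h3 h5 h7, tv444 h2 h3 h5 h7, cc_FF0]
      simp only [v5, zero_div, mul_zero, add_zero]
    unfold Goal
    rw [this, zero_mul]
  · have hd : (0 : k) * 0 - 1 * (-1) = 1 := by ring
    obtain ⟨b, hb⟩ : ∃ b : Fin 9 → k, octForm b = sb 0 1 (-1) 0 (octForm a) := by
      rw [oct_FF, sbS8]; exact oct_ex _
    apply transfer _ _ _ _ hd a b hb
    obtain ⟨ek, -, -, -, e4, e5, e6, e7, -⟩ := J_inv _ _ _ _ hd a b hb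
    rw [hκ, sbS4] at ek
    simp only [v5] at ek
    exact stepA h2 h3 h5 h7 b _ _ _ _ _ ek (by convert hn' using 1; ring)
      (e4.trans H4) (e5.trans H5) (e6.trans H6) (e7.trans H7)

lemma ne_of_char (p : ℕ) (hp : p.Prime) (h : ringChar k ≠ p) : (p : k) ≠ 0 := by
  intro h0
  have := (Nat.dvd_prime hp).1 (ringChar.dvd h0)
  rcases this with h1 | h1
  · exact CharP.ringChar_ne_one h1
  · exact h h1

end Q

/-- If `J_4 = J_5 = J_6 = J_7 = 0` for a binary octavic, then
`J_8·(−10125·J_8 + 1075648·J_2⁴ − 42336·J_3²·J_2) = 0`. -/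
theorem J8_relation_of_J4567_eq_zero (k : Type*) [Field k] (hk : CharOK k) (a : Fin 9 → k)
    (h4 : J4 a = 0) (h5 : J5 a = 0) (h6 : J6 a = 0) (h7 : J7 a = 0) :
    J8 a * (-(10125 : k) * J8 a + 1075648 * J2 a ^ 4 - 42336 * J3 a ^ 2 * J2 a) = 0 := by
  obtain ⟨c2, c3, c5, c7⟩ := hk
  have h2 : (2 : k) ≠ 0 := by exact_mod_cast ne_of_char 2 (by norm_num) c2
  have h3 : (3 : k) ≠ 0 := by exact_mod_cast ne_of_char 3 (by norm_num) c3
  have h5' : (5 : k) ≠ 0 := by exact_mod_cast ne_of_char 5 (by norm_num) c5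
  have h7' : (7 : k) ≠ 0 := by exact_mod_cast ne_of_char 7 (by norm_num) c7
  exact main_goal h2 h3 h5' h7' a h4 h5 h6 h7
end
end

section
/- For a binary octavic f(X,Y) = Σ_{i=0}^{8} a_i X^i Y^{8−i} over a field k with char k ∉ {2,3,5,7}, the following explicit formulas hold: J_2 := 2^2·5·7·(f,f)^8 = 280 a_8a_0 − 35 a_7a_1 + 10 a_6a_2 − 5 a_5a_3 + 2 a_4^2, and, with g := (f,f)^4, J_3 := (1/3)·2^4·5^2·7^3·(f,g)^8 = 1050 a_8a_2^2 + 1050 a_6^2a_0 + 75 a_6a_3^2 + 75 a_5^2a_2 + 12 a_4^3 + 3920 a_8a_4a_0 − 2450 a_8a_3a_1 + 735 a_7a_4a_1 − 2450 a_7a_5a_0 − 175 a_7a_3a_2 − 110 a_6a_4a_2 − 175 a_6a_5a_1 − 45 a_5a_4a_3. -/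
noncomputable section

open MvPolynomial


variable {k : Type*} [Field k]

theorem iter0 (r : ℕ) (c : Fin 9 → k) (u v : Fin 9 → ℕ) :
    (fun p : MvPolynomial (Fin 2) k => pderiv (0 : Fin 2) p)^[r]
      (∑ i : Fin 9, C (c i) * X 0 ^ u i * X 1 ^ v i) =
    ∑ i : Fin 9, C (c i * ((u i).descFactorial r : k)) * X 0 ^ (u i - r) * X 1 ^ v i := by
  induction r with
  | zero => simp
  | succ r ih =>
    rw [Function.iterate_succ_apply', ih]
    simp only [map_sum]
    refine Finset.sum_congr rfl fun i _ => ?_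
    rw [Nat.descFactorial_succ, Nat.sub_add_eq]
    simp [pderiv_X, pderiv_pow, Derivation.leibniz, smul_eq_mul, Pi.single_apply]
    ring

theorem iter1 (r : ℕ) (c : Fin 9 → k) (u v : Fin 9 → ℕ) :
    (fun p : MvPolynomial (Fin 2) k => pderiv (1 : Fin 2) p)^[r]
      (∑ i : Fin 9, C (c i) * X 0 ^ u i * X 1 ^ v i) =
    ∑ i : Fin 9, C (c i * ((v i).descFactorial r : k)) * X 0 ^ u i * X 1 ^ (v i - r) := by
  induction r with
  | zero => simp
  | succ r ih =>
    rw [Function.iterate_succ_apply', ih]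
    simp only [map_sum]
    refine Finset.sum_congr rfl fun i _ => ?_
    rw [Nat.descFactorial_succ, Nat.sub_add_eq]
    simp [pderiv_X, pderiv_pow, Derivation.leibniz, smul_eq_mul, Pi.single_apply]
    ring

theorem iterOct (p q : ℕ) (a : Fin 9 → k) :
    (fun p : MvPolynomial (Fin 2) k => pderiv (0 : Fin 2) p)^[p]
      ((fun p : MvPolynomial (Fin 2) k => pderiv (1 : Fin 2) p)^[q] (octForm a)) =
    ∑ i : Fin 9, C (a i * ((8 - (i : ℕ)).descFactorial q : k) * ((i : ℕ).descFactorial p : k))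
      * X 0 ^ ((i : ℕ) - p) * X 1 ^ (8 - (i : ℕ) - q) := by
  unfold octForm
  rw [iter1, iter0]

theorem trans8 (a b : Fin 9 → k) :
    constantCoeff (transvectant 8 8 8 (octForm a) (octForm b)) =
      ((1 : k) / ((40320 * 40320 : ℕ) : k)) * (40320 * (40320 * (a 8 * b 0 + a 0 * b 8)
        - 5040 * (a 7 * b 1 + a 1 * b 7) + 1440 * (a 6 * b 2 + a 2 * b 6)
        - 720 * (a 5 * b 3 + a 3 * b 5) + 576 * a 4 * b 4)) := by
  unfold transvectant
  simp only [iterOct, map_mul, map_sum, constantCoeff_C, map_pow, constantCoeff_X]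
  congr 1
  · norm_num [Nat.factorial]
  simp [Finset.sum_range_succ, Fin.sum_univ_succ, Nat.descFactorial, Nat.choose, Fin.succ]
  ring

def gco (a : Fin 9 → k) : Fin 9 → k :=
  ![(80640) * a 0 * a 4 + (-50400) * a 1 * a 3 + (21600) * a 2 * a 2,
    (-120960) * a 1 * a 4 + (403200) * a 0 * a 5 + (28800) * a 2 * a 3,
    (-63360) * a 2 * a 4 + (-100800) * a 1 * a 5 + (1209600) * a 0 * a 6 + (43200) * a 3 * a 3,
    (51840) * a 3 * a 4 + (-172800) * a 2 * a 5 + (201600) * a 1 * a 6 + (2822400) * a 0 * a 7,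
    (51840) * a 4 * a 4 + (-64800) * a 3 * a 5 + (-158400) * a 2 * a 6 + (1058400) * a 1 * a 7 + (5644800) * a 0 * a 8,
    (51840) * a 4 * a 5 + (-172800) * a 3 * a 6 + (201600) * a 2 * a 7 + (2822400) * a 1 * a 8,
    (-63360) * a 4 * a 6 + (-100800) * a 3 * a 7 + (1209600) * a 2 * a 8 + (43200) * a 5 * a 5,
    (-120960) * a 4 * a 7 + (403200) * a 3 * a 8 + (28800) * a 5 * a 6,
    (80640) * a 4 * a 8 + (-50400) * a 5 * a 7 + (21600) * a 6 * a 6]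

set_option maxHeartbeats 4000000 in
theorem covg_eq (a : Fin 9 → k) :
    covg a = octForm (fun i => ((24 * 24 : ℕ) : k) / ((40320 * 40320 : ℕ) : k) * gco a i) := by
  have h : ∀ (c : k) (b : Fin 9 → k), octForm (fun i => c * b i) = C c * octForm b := by
    intro c b
    simp only [octForm, Finset.mul_sum, map_mul, mul_assoc]
  rw [h]
  unfold covg transvectant
  simp only [iterOct]
  congr 1
  have hC : ∀ (n : ℕ) [n.AtLeastTwo],
      (C (OfNat.ofNat n : k) : MvPolynomial (Fin 2) k) = OfNat.ofNat n := fun n _ => map_ofNat C n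
  simp [hC, octForm, gco, Finset.sum_range_succ, Fin.sum_univ_succ, Nat.descFactorial, Nat.choose, Fin.succ]
  ring

/-- Explicit formulas for `J_2` and `J_3` in terms of the coefficients `a_0, ..., a_8` of a
binary octavic. -/
theorem J2_J3_explicit (k : Type*) [Field k] (hk : CharOK k) (a : Fin 9 → k) :
    J2 a = 280 * a 8 * a 0 - 35 * a 7 * a 1 + 10 * a 6 * a 2 - 5 * a 5 * a 3 + 2 * a 4 ^ 2 ∧
    J3 a = 1050 * a 8 * a 2 ^ 2 + 1050 * a 6 ^ 2 * a 0 + 75 * a 6 * a 3 ^ 2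
      + 75 * a 5 ^ 2 * a 2 + 12 * a 4 ^ 3 + 3920 * a 8 * a 4 * a 0 - 2450 * a 8 * a 3 * a 1
      + 735 * a 7 * a 4 * a 1 - 2450 * a 7 * a 5 * a 0 - 175 * a 7 * a 3 * a 2
      - 110 * a 6 * a 4 * a 2 - 175 * a 6 * a 5 * a 1 - 45 * a 5 * a 4 * a 3 := by
  obtain ⟨h2, h3, h5, h7⟩ := hk
  have key : ∀ p : ℕ, p.Prime → ringChar k ≠ p → (p : k) ≠ 0 := by
    intro p hp hne h0
    rcases (Nat.dvd_prime hp).1 (ringChar.dvd h0) with h | h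
    · exact CharP.ringChar_ne_one h
    · exact hne h
  have e2 : (2 : k) ≠ 0 := by exact_mod_cast key 2 (by norm_num) h2
  have e3 : (3 : k) ≠ 0 := by exact_mod_cast key 3 (by norm_num) h3
  have e5 : (5 : k) ≠ 0 := by exact_mod_cast key 5 (by norm_num) h5
  have e7 : (7 : k) ≠ 0 := by exact_mod_cast key 7 (by norm_num) h7
  have e : (40320 : k) = 2 ^ 7 * 3 ^ 2 * 5 * 7 := by norm_num
  have e' : ((40320 * 40320 : ℕ) : k) = (2 ^ 7 * 3 ^ 2 * 5 * 7) ^ 2 := by norm_num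
  constructor
  · unfold J2
    rw [trans8, e']
    field_simp
    ring
  · unfold J3
    rw [covg_eq, trans8, e']
    simp [gco]
    field_simp
    ring
end
end
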